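/- For every continuous f : Σ_N^+ → ℝ and every M ≥ 0, the Neumann derivative of G_μ f exists at every point of V_M, and d(G_μ f)(p) = lim_{m→∞}(−H_m(G_μ f)(p)) equals 0 if p ∈ V_M ∖ V_0, and equals −∫_{[p_1]} f dμ if p = (ṗ_1) ∈ V_0 is the constant sequence with value p_1. -/

import Mathlib

open Filter Topology MeasureTheory Finset Classical

noncomputable section

/-- The one-sided full shift space `Σ_N^+` on `N` symbols; coordinates are indexed
from `0`, so the paper's `x_1 x_2 ⋯` is `x 0, x 1, ⋯` here. It carries the product
of the discrete topology on `Fin N`. -/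
abbrev SSp (N : ℕ) : Type := ℕ → Fin N

/-- The level-`m` vertex set `V_m = {p : p_i = p_{i+1} for all i ≥ m+1}` (1-based),
i.e. the sequences that are constant from (0-based) coordinate `m` on.  It is
realized as a `Finset` via the parametrization by the first `m+1` coordinates;
see `mem_V` for the defining property. -/
noncomputable def V (N m : ℕ) : Finset (SSp N) :=
  (Finset.univ : Finset (Fin (m + 1) → Fin N)).image
    (fun w j => w ⟨min j m, by omega⟩)

lemma const_from (N m : ℕ) (p : SSp N) (h : ∀ i, m ≤ i → p i = p (i + 1)) :
    ∀ j, m ≤ j → p j = p m := by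
  intro j hj
  induction j with
  | zero => have : m = 0 := by omega
            simp [this]
  | succ k ih =>
      rcases Nat.lt_or_ge k m with hk | hk
      · have : m = k + 1 := by omega
        simp [this]
      · rw [← h k hk]
        exact ih hk

/-- Membership in `V N m` is exactly the paper's condition
`p_i = p_{i+1}` for all `i ≥ m+1` (1-based), i.e. `p i = p (i+1)` for all `i ≥ m`. -/
lemma mem_V {N m : ℕ} {p : SSp N} :
    p ∈ V N m ↔ ∀ i, m ≤ i → p i = p (i + 1) := by
  classical
  constructor
  · intro hp i hi
    simp only [V, Finset.mem_image] at hp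
    obtain ⟨w, -, rfl⟩ := hp
    have h1 : min i m = m := by omega
    have h2 : min (i + 1) m = m := by omega
    simp [h1, h2]
  · intro h
    simp only [V, Finset.mem_image]
    refine ⟨fun j => p j, Finset.mem_univ _, ?_⟩
    funext j
    rcases Nat.lt_or_ge j m with hj | hj
    · have : min j m = j := by omega
      simp [this]
    · have : min j m = m := by omega
      simp only [this]
      exact (const_from N m p h j hj).symm

/-- The deleted neighbourhood `U_{p,m} = {q ∈ V_m : q ≠ p, q_i = p_i for 1 ≤ i ≤ m}`
(1-based), i.e. `q` agrees with `p` on the first `m` (0-based: `i < m`) coordinates. -/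
noncomputable def U (N m : ℕ) (p : SSp N) : Finset (SSp N) :=
  (V N m).filter (fun q => q ≠ p ∧ ∀ i, i < m → q i = p i)

/-- `κ_p = min {j : p ∈ V_j}`. -/
noncomputable def kappa (N : ℕ) (p : SSp N) : ℕ := sInf {j | p ∈ V N j}

/-- The difference operator
`H_m u (p) = Σ_{i = κ_p}^{m} Σ_{q ∈ U_{p,i}} (u(q) − u(p))`. -/
noncomputable def H (N m : ℕ) (u : SSp N → ℝ) (p : SSp N) : ℝ :=
  ∑ i ∈ Finset.Icc (kappa N p) m, ∑ q ∈ U N i p, (u q - u p)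

/-- The Dirichlet form `E_{H_m}(u, v) = − Σ_{p ∈ V_m} u(p) · H_m v(p)`. -/
noncomputable def EH (N m : ℕ) (u v : SSp N → ℝ) : ℝ :=
  -∑ p ∈ V N m, u p * H N m v p

/-- The cylinder set `[p_1 ⋯ p_m]`, determined by the first `m` coordinates of `p`. -/
def cyl (N m : ℕ) (p : SSp N) : Set (SSp N) := {x | ∀ i, i < m → x i = p i}

/-- `χ_p^m` : the indicator function of the cylinder set `[p_1 ⋯ p_{m+1}]`. -/
noncomputable def chi (N m : ℕ) (p : SSp N) : SSp N → ℝ :=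
  (cyl N (m + 1) p).indicator 1

/-- `u ∈ dom E`: `u` is continuous and the energy
`E(u) = lim_m E_{H_m}(u|_{V_m})` exists (and is finite). -/
def MemDomE (N : ℕ) (u : SSp N → ℝ) : Prop :=
  Continuous u ∧ ∃ L : ℝ, Tendsto (fun m => EH N m u u) atTop (nhds L)

/-- `v ∈ dom_M E`: `v` has finite energy and vanishes on the boundary `V_M`. -/
def MemDomME (N M : ℕ) (v : SSp N → ℝ) : Prop :=
  MemDomE N v ∧ ∀ p ∈ V N M, v p = 0

/-- `u ∈ 𝒟_M` with `Δ u = f` (strong formulation with boundary `V_M`):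
`u` and `f` are continuous and
`lim_{m → ∞} max_{p ∈ V_m ∖ V_M} |N^{m+1} H_m u(p) − f(p)| = 0`. -/
def IsLaplacianOn (N M : ℕ) (u f : SSp N → ℝ) : Prop :=
  Continuous u ∧ Continuous f ∧
    ∀ ε : ℝ, 0 < ε → ∃ m₀ : ℕ, ∀ m, m₀ ≤ m → ∀ p ∈ V N m, p ∉ V N M →
      |(N : ℝ) ^ (m + 1) * H N m u p - f p| < ε

/-- `u ∈ D_μ` with `Δ u = f` (original definition of the Laplacian):
`u` and `f` are continuous and
`lim_{m → ∞} max_{p ∈ V_m ∖ V_{m−1}} |N^{m+1} H_m u(p) − f(p)| = 0`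
(the level is written `m+1` to avoid natural subtraction). -/
def IsLaplacianDmu (N : ℕ) (u f : SSp N → ℝ) : Prop :=
  Continuous u ∧ Continuous f ∧
    ∀ ε : ℝ, 0 < ε → ∃ m₀ : ℕ, ∀ m, m₀ ≤ m → ∀ p ∈ V N (m + 1), p ∉ V N m →
      |(N : ℝ) ^ (m + 2) * H N (m + 1) u p - f p| < ε

/-- `μ` is the equidistributed Bernoulli measure:
`μ([p_1 ⋯ p_m]) = N^{−m}` for every cylinder set. -/
def IsBernoulli (N : ℕ) (μ : Measure (SSp N)) : Prop :=
  ∀ (m : ℕ) (p : SSp N), μ (cyl N m p) = (N : ENNReal)⁻¹ ^ m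

/-- `ρ(x,y) = min {i : x_i ≠ y_i}` (1-based; `0`-based first disagreement plus one). -/
noncomputable def rho (N : ℕ) (x y : SSp N) : ℕ := sInf {i | x i ≠ y i} + 1

/-- The matrix `(G_m)_{pq}`: `2/N` if `q = p`, `1/N` if `q ∈ U_{p,m}`, `0` otherwise. -/
noncomputable def Gmat (N m : ℕ) (p q : SSp N) : ℝ :=
  if q = p then 2 / N else if q ∈ U N m p then 1 / N else 0

/-- The Green's function
`g(x,y) = Σ_{m=1}^{ρ(x,y)−1} Σ_{r,s ∈ V_m ∖ V_{m−1}} (G_m)_{rs} χ_r^m(x) χ_s^m(y)`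
for `ρ(x,y) > 1`, and `g(x,y) = 0` for `ρ(x,y) = 1` (the sum is then empty). -/
noncomputable def greenFn (N : ℕ) (x y : SSp N) : ℝ :=
  ∑ m ∈ Finset.Icc 1 (rho N x y - 1),
    ∑ r ∈ (V N m).filter (fun r => r ∉ V N (m - 1)),
      ∑ s ∈ (V N m).filter (fun s => s ∉ V N (m - 1)),
        Gmat N m r s * chi N m r x * chi N m s y

/-- The Green's operator `G_μ f (x) = ∫_{Σ_N^+ ∖ {x}} g(x,y) f(y) dμ(y)`. -/
noncomputable def Gop (N : ℕ) (μ : Measure (SSp N)) (f : SSp N → ℝ) (x : SSp N) : ℝ :=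
  ∫ y in ({x}ᶜ : Set (SSp N)), greenFn N x y * f y ∂μ

/-!
On `⋃ V_m`, `G_μ f` is a finite sum of integrals against the levels of the Green's function.
A neighbour `q ∈ U_{p,i}` of `p` shares with `p` every level below `i`, so
`G_μ f (q) - G_μ f (p)` only sees level `i`. On the continuations of a common prefix ending in
the symbol `a`, the matrix `G_i` is `(I + J) / N` on the symbols other than `a`, where `J` is the
all-ones matrix; this is the inverse of the Laplacian of the complete graph on the symbols,
grounded at `a`. Hence summing over `q ∈ U_{p,i}` collapses the kernel to
`χ_{[p_1⋯p_i]} - χ_{[p_1⋯p_{i+1}]}`, the first term being absent when `i = κ_p`. The sum over `i`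
telescopes to `-∫_{[p_1⋯p_{m+1}]} f dμ`, plus `∫_{[p_1]} f dμ` when `p` is constant because the
Green's function has no level `0`. The shrinking cylinders contribute nothing in the limit, since
points have measure zero.
-/

section GreenOperator

variable {N m n : ℕ} {p q x y : SSp N}

lemma measurableSet_cyl (n : ℕ) (p : SSp N) : MeasurableSet (cyl N n p) :=
  (PiNat.isOpen_cylinder (fun _ => Fin N) p n).measurableSet

lemma antitone_cyl (p : SSp N) : Antitone fun n => cyl N n p :=
  fun _ _ h => PiNat.cylinder_anti p h

lemma mem_cyl_succ : y ∈ cyl N (n + 1) p ↔ y ∈ cyl N n p ∧ y n = p n :=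
  Nat.forall_lt_succ_right

lemma iInter_cyl (p : SSp N) : ⋂ n, cyl N n p = {p} := by
  ext x
  simp only [Set.mem_iInter, Set.mem_singleton_iff]
  refine ⟨fun h => funext fun i => h (i + 1) i i.lt_succ_self, ?_⟩
  rintro rfl n i -
  rfl

lemma tendsto_setIntegral_cyl {μ : Measure (SSp N)} [NullSingletonClass μ] {f : SSp N → ℝ}
    (hf : Integrable f μ) (p : SSp N) :
    Tendsto (fun n => ∫ y in cyl N n p, f y ∂μ) atTop (𝓝 0) := by
  have hzero : ∫ y in ⋂ n, cyl N n p, f y ∂μ = 0 := by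
    rw [iInter_cyl, setIntegral_measure_zero f (measure_singleton p)]
  exact hzero ▸ tendsto_setIntegral_of_antitone (fun n => measurableSet_cyl n p)
    (antitone_cyl p) ⟨0, hf.integrableOn⟩

lemma IsBernoulli.nullSingletonClass (hN : 2 ≤ N) {μ : Measure (SSp N)}
    (hμ : IsBernoulli N μ) : NullSingletonClass μ where
  measure_singleton p := by
    have hlt : (N : ENNReal)⁻¹ < 1 := ENNReal.inv_lt_one.2 (by exact_mod_cast hN)
    refine le_antisymm ?_ zero_le
    refine ge_of_tendsto' (ENNReal.tendsto_pow_atTop_nhds_zero_of_lt_one hlt) fun n => ?_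
    rw [← hμ n p]
    exact measure_mono (Set.singleton_subset_iff.2 (PiNat.self_mem_cylinder p n))

lemma V_mono : Monotone (V N) :=
  fun _ _ h _ hp => mem_V.2 fun i hi => mem_V.1 hp i (h.trans hi)

lemma mem_V_of_kappa_le (hp : p ∈ V N n) (hm : kappa N p ≤ m) : p ∈ V N m :=
  V_mono hm (Nat.sInf_mem (s := {j | p ∈ V N j}) ⟨n, hp⟩)

lemma kappa_eq_zero_iff (hp : p ∈ V N n) : kappa N p = 0 ↔ p ∈ V N 0 :=
  ⟨fun h => mem_V_of_kappa_le hp h.le, fun h => Nat.le_zero.1 (Nat.sInf_le h)⟩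

/-- The projection of the shift space onto `V_m`: keep the coordinates `0, …, m` and repeat the
last of them forever. -/
def trunc (m : ℕ) (x : SSp N) : SSp N := fun j => x (min j m)

lemma trunc_apply_of_le {j : ℕ} (h : j ≤ m) (x : SSp N) : trunc m x j = x j := by
  rw [trunc, min_eq_left h]

lemma trunc_mem_V (m : ℕ) (x : SSp N) : trunc m x ∈ V N m :=
  mem_V.2 fun i hi => by rw [trunc, trunc, min_eq_right hi, min_eq_right (hi.trans i.le_succ)]

lemma trunc_eq_self (hx : x ∈ V N m) : trunc m x = x := by
  funext j
  rcases le_total j m with hj | hj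
  · exact trunc_apply_of_le hj x
  · rw [trunc, min_eq_right hj, const_from N m x (mem_V.1 hx) j hj]

lemma trunc_eq_trunc_iff : trunc m y = trunc m x ↔ y ∈ cyl N (m + 1) x := by
  refine ⟨fun h i hi => ?_, fun h => funext fun j => h _ (by omega)⟩
  rw [← trunc_apply_of_le (Nat.le_of_lt_succ hi) y, h, trunc_apply_of_le (Nat.le_of_lt_succ hi)]

lemma mem_V_iff_of_mem_V_succ (hx : x ∈ V N (m + 1)) : x ∈ V N m ↔ x m = x (m + 1) := by
  refine ⟨fun h => mem_V.1 h m le_rfl, fun h => mem_V.2 fun i hi => ?_⟩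
  rcases hi.eq_or_lt with rfl | hi
  · exact h
  · exact mem_V.1 hx i hi

lemma apply_kappa_pred_ne {k : ℕ} (hp : p ∈ V N n) (hk : kappa N p = k + 1) :
    p k ≠ p (k + 1) := by
  refine mt (mem_V_iff_of_mem_V_succ (mem_V_of_kappa_le hp hk.le)).2 fun h => ?_
  have : kappa N p ≤ k := Nat.sInf_le h
  omega

lemma mem_U : q ∈ U N m p ↔ q ∈ V N m ∧ q ≠ p ∧ q ∈ cyl N m p :=
  Finset.mem_filter

/-- The vertex of `V_m` that follows `p` on the coordinates below `m` and is constantly `c` from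
coordinate `m` on. As `c` varies, these are the vertices of `U_{p,m} ∪ {p}` when `p ∈ V_m`. -/
def branch (m : ℕ) (p : SSp N) (c : Fin N) : SSp N := trunc m (Function.update p m c)

lemma branch_mem_V (m : ℕ) (p : SSp N) (c : Fin N) : branch m p c ∈ V N m := trunc_mem_V m _

lemma branch_mem_cyl (m : ℕ) (p : SSp N) (c : Fin N) : branch m p c ∈ cyl N m p := fun i hi => by
  rw [branch, trunc_apply_of_le hi.le, Function.update_of_ne hi.ne]

lemma branch_apply_self (m : ℕ) (p : SSp N) (c : Fin N) : branch m p c m = c := by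
  rw [branch, trunc_apply_of_le le_rfl, Function.update_self]

lemma branch_eq_of_mem_cyl (hq : q ∈ V N m) (hqp : q ∈ cyl N m p) : branch m p (q m) = q := by
  refine Eq.trans (trunc_eq_trunc_iff.2 ?_) (trunc_eq_self hq)
  refine mem_cyl_succ.2 ⟨fun i hi => ?_, Function.update_self ..⟩
  rw [Function.update_of_ne hi.ne, hqp i hi]

lemma branch_injective (m : ℕ) (p : SSp N) : Function.Injective (branch m p) :=
  fun c d h => by simpa only [branch_apply_self] using congrFun h m

lemma branch_eq_self (hp : p ∈ V N m) : branch m p (p m) = p :=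
  branch_eq_of_mem_cyl hp (PiNat.self_mem_cylinder p m)

lemma U_eq_image_branch (hp : p ∈ V N m) :
    U N m p = (Finset.univ.erase (p m)).image (branch m p) := by
  ext q
  simp only [mem_U, Finset.mem_image, Finset.mem_erase, Finset.mem_univ, and_true]
  constructor
  · rintro ⟨hq, hne, hqp⟩
    refine ⟨q m, fun h => hne ?_, branch_eq_of_mem_cyl hq hqp⟩
    rw [← branch_eq_of_mem_cyl hq hqp, h, branch_eq_self hp]
  · rintro ⟨c, hc, rfl⟩
    refine ⟨branch_mem_V m p c, fun h => hc ?_, branch_mem_cyl m p c⟩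
    rw [← branch_apply_self m p c, h]

lemma sum_U_sub {E : Type*} [AddCommGroup E] (hp : p ∈ V N m) (u : SSp N → E) :
    ∑ q ∈ U N m p, (u q - u p) = ∑ c, (u (branch m p c) - u p) := by
  rw [U_eq_image_branch hp, Finset.sum_image (branch_injective m p).injOn, Finset.sum_erase]
  rw [branch_eq_self hp, sub_self]

/-- The summand of level `m` of the Green's function. -/
def greenLevel (m : ℕ) (x y : SSp N) : ℝ :=
  ∑ r ∈ (V N m).filter (fun r => r ∉ V N (m - 1)),
    ∑ s ∈ (V N m).filter (fun s => s ∉ V N (m - 1)),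
      Gmat N m r s * chi N m r x * chi N m s y

lemma chi_of_mem_V {r : SSp N} (hr : r ∈ V N m) (x : SSp N) :
    chi N m r x = if trunc m x = r then 1 else 0 := by
  rw [chi, Set.indicator_apply, Pi.one_apply]
  exact if_congr (by rw [← trunc_eq_trunc_iff, trunc_eq_self hr]) rfl rfl

lemma sum_mul_chi (F : SSp N → ℝ) (x : SSp N) :
    ∑ r ∈ (V N (m + 1)).filter (fun r => r ∉ V N m), F r * chi N (m + 1) r x
      = if x m ≠ x (m + 1) then F (trunc (m + 1) x) else 0 := by
  have hmem : trunc (m + 1) x ∈ (V N (m + 1)).filter (fun r => r ∉ V N m) ↔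
      x m ≠ x (m + 1) := by
    rw [Finset.mem_filter, mem_V_iff_of_mem_V_succ (trunc_mem_V _ x),
      trunc_apply_of_le m.le_succ, trunc_apply_of_le le_rfl]
    exact and_iff_right (trunc_mem_V _ x)
  calc _ = ∑ r ∈ (V N (m + 1)).filter (fun r => r ∉ V N m),
        if trunc (m + 1) x = r then F r else 0 :=
        Finset.sum_congr rfl fun r hr => by
          rw [chi_of_mem_V (Finset.mem_filter.1 hr).1, mul_ite, mul_one, mul_zero]
    _ = _ := by rw [Finset.sum_ite_eq, if_congr hmem rfl rfl]

lemma greenLevel_succ (x y : SSp N) :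
    greenLevel (m + 1) x y = if x m ≠ x (m + 1) ∧ y m ≠ y (m + 1) then
      Gmat N (m + 1) (trunc (m + 1) x) (trunc (m + 1) y) else 0 := by
  simp only [greenLevel, add_tsub_cancel_right, mul_right_comm _ (chi N (m + 1) _ x),
    ← Finset.sum_mul, sum_mul_chi, ite_and]

lemma greenLevel_succ_eq_zero_of_mem_V (hx : x ∈ V N m) (y : SSp N) :
    greenLevel (m + 1) x y = 0 := by
  rw [greenLevel_succ, if_neg fun h => h.1 (mem_V.1 hx m le_rfl)]

lemma Gmat_trunc_of_mem_cyl (h : y ∈ cyl N m x) :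
    Gmat N m (trunc m x) (trunc m y) = if y m = x m then 2 / (N : ℝ) else 1 / N := by
  have heq : trunc m y = trunc m x ↔ y m = x m := by
    rw [trunc_eq_trunc_iff, mem_cyl_succ, and_iff_right h]
  have hcyl : trunc m y ∈ cyl N m (trunc m x) := fun i hi => by
    rw [trunc_apply_of_le hi.le, trunc_apply_of_le hi.le, h i hi]
  by_cases hm : y m = x m <;> simp [Gmat, mem_U, heq, trunc_mem_V, hcyl, hm]

lemma Gmat_trunc_of_notMem_cyl (h : y ∉ cyl N m x) :
    Gmat N m (trunc m x) (trunc m y) = 0 := by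
  have hne : trunc m y ≠ trunc m x := fun he => h (mem_cyl_succ.1 (trunc_eq_trunc_iff.1 he)).1
  have hU : trunc m y ∉ U N m (trunc m x) := fun hU => h fun i hi => by
    simpa [trunc_apply_of_le hi.le] using (mem_U.1 hU).2.2 i hi
  rw [Gmat, if_neg hne, if_neg hU]

/-- The inverse of the Laplacian `N • 1 - J` of the complete graph on the symbols, grounded at
the symbol `a`, extended by zero to `b = a` and `c = a`. It describes the matrix `G_m` on the
one-symbol continuations `b`, `c` of a common prefix ending in `a`. -/
def groundedGreen (a b c : Fin N) : ℝ :=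
  if b ≠ a ∧ c ≠ a then if c = b then 2 / N else 1 / N else 0

lemma sum_groundedGreen (a c : Fin N) :
    ∑ d, groundedGreen a d c = if c = a then 0 else 1 := by
  have hN : (N : ℝ) ≠ 0 := Nat.cast_ne_zero.2 a.pos.ne'
  by_cases hca : c = a
  · simp [groundedGreen, hca]
  · have hentry : ∀ d, groundedGreen a d c
        = 1 / N + (if d = c then 1 / (N : ℝ) else 0) - (if d = a then 1 / (N : ℝ) else 0) := by
      intro d
      unfold groundedGreen
      grind
    simp [hentry, Finset.sum_sub_distrib, Finset.sum_add_distrib, hca, hN]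

lemma sum_groundedGreen_sub (a b c : Fin N) :
    ∑ d, (groundedGreen a d c - groundedGreen a b c)
      = (if a = b then 1 else 0) - if c = b then 1 else 0 := by
  have hN : (N : ℝ) ≠ 0 := Nat.cast_ne_zero.2 a.pos.ne'
  rw [Finset.sum_sub_distrib, sum_groundedGreen, Finset.sum_const, Finset.card_univ,
    Fintype.card_fin, nsmul_eq_mul]
  unfold groundedGreen
  grind

lemma greenLevel_succ_of_mem_cyl (h : y ∈ cyl N (m + 1) x) :
    greenLevel (m + 1) x y = groundedGreen (x m) (x (m + 1)) (y (m + 1)) := by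
  simp only [greenLevel_succ, Gmat_trunc_of_mem_cyl h, groundedGreen, h m m.lt_succ_self, ne_comm]

lemma greenLevel_succ_of_notMem_cyl (h : y ∉ cyl N (m + 1) x) :
    greenLevel (m + 1) x y = 0 := by
  rw [greenLevel_succ, Gmat_trunc_of_notMem_cyl h, ite_self]

lemma greenLevel_congr (h : q ∈ cyl N (m + 1) p) : greenLevel m q = greenLevel m p := by
  have hchi : ∀ r, chi N m r q = chi N m r p := fun r => by
    rw [chi, Set.indicator_apply, Set.indicator_apply]
    exact if_congr (forall₂_congr fun i hi => by rw [h i hi]) rfl rfl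
  funext y
  simp only [greenLevel, hchi]

lemma sum_U_greenLevel_sub (hp : p ∈ V N (m + 1)) (y : SSp N) :
    ∑ q ∈ U N (m + 1) p, (greenLevel (m + 1) q y - greenLevel (m + 1) p y)
      = (if p m = p (m + 1) then (cyl N (m + 1) p).indicator 1 y else 0)
        - (cyl N (m + 2) p).indicator 1 y := by
  have hcyl : ∀ c, y ∈ cyl N (m + 1) (branch (m + 1) p c) ↔ y ∈ cyl N (m + 1) p := fun c =>
    forall₂_congr fun i hi => by rw [branch_mem_cyl _ p c i hi]
  rw [sum_U_sub hp fun q => greenLevel (m + 1) q y]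
  by_cases hy : y ∈ cyl N (m + 1) p
  · have hbranch : ∀ c, greenLevel (m + 1) (branch (m + 1) p c) y
        = groundedGreen (p m) c (y (m + 1)) := fun c => by
      rw [greenLevel_succ_of_mem_cyl ((hcyl c).2 hy), branch_apply_self,
        branch_mem_cyl _ p c m m.lt_succ_self]
    simp only [hbranch, greenLevel_succ_of_mem_cyl hy, sum_groundedGreen_sub,
      Set.indicator_apply, mem_cyl_succ (n := m + 1), hy, true_and, if_true, Pi.one_apply]
  · have hy' : y ∉ cyl N (m + 2) p := fun h => hy (mem_cyl_succ.1 h).1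
    simp only [greenLevel_succ_of_notMem_cyl (mt (hcyl _).1 hy), greenLevel_succ_of_notMem_cyl hy,
      Set.indicator_of_notMem hy, Set.indicator_of_notMem hy', ite_self, sub_self,
      Finset.sum_const_zero]

lemma greenFn_eq_sum_greenLevel (hx : x ∈ V N n) (hxy : x ≠ y) :
    greenFn N x y = ∑ m ∈ Finset.Icc 1 n, greenLevel m x y := by
  set d := rho N x y - 1
  have hne : x d ≠ y d := Nat.sInf_mem (s := {i | x i ≠ y i}) (Function.ne_iff.1 hxy)
  change ∑ m ∈ Finset.Icc 1 d, greenLevel m x y = _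
  refine Finset.sum_congr_of_eq_on_inter (fun m hmd hmn => ?_) (fun m hmn hmd => ?_)
    fun _ _ _ => rfl
  · obtain ⟨k, rfl⟩ := Nat.exists_eq_add_of_le' (Finset.mem_Icc.1 hmd).1
    rw [Finset.mem_Icc] at hmn
    exact greenLevel_succ_eq_zero_of_mem_V (V_mono (by omega) hx) y
  · obtain ⟨k, rfl⟩ := Nat.exists_eq_add_of_le' (Finset.mem_Icc.1 hmn).1
    rw [Finset.mem_Icc] at hmd
    exact greenLevel_succ_of_notMem_cyl fun h => hne (h d (by omega)).symm

variable {μ : Measure (SSp N)} {f : SSp N → ℝ}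

lemma integrable_greenLevel_mul (hf : Integrable f μ) (m : ℕ) (x : SSp N) :
    Integrable (fun y => greenLevel m x y * f y) μ := by
  simp only [greenLevel, Finset.sum_mul, mul_assoc]
  refine integrable_finsetSum _ fun r _ => integrable_finsetSum _ fun s _ => ?_
  have hchi : (fun y => chi N m s y * f y) = (cyl N (m + 1) s).indicator f := by
    ext y
    simp [chi, Set.indicator_apply]
  exact ((hchi ▸ hf.indicator (measurableSet_cyl (m + 1) s)).const_mul _).const_mul _

variable [NullSingletonClass μ]

lemma Gop_eq_sum_integral (hf : Integrable f μ) (hx : x ∈ V N n) :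
    Gop N μ f x = ∑ m ∈ Finset.Icc 1 n, ∫ y, greenLevel m x y * f y ∂μ := by
  have hgreen : ∀ᵐ y ∂μ, greenFn N x y * f y
      = ∑ m ∈ Finset.Icc 1 n, greenLevel m x y * f y := by
    filter_upwards [Measure.ae_ne μ x] with y hy
    rw [greenFn_eq_sum_greenLevel hx hy.symm, Finset.sum_mul]
  rw [Gop, restrict_compl_singleton, integral_congr_ae hgreen,
    integral_finsetSum _ fun m _ => integrable_greenLevel_mul hf m x]

lemma Gop_eq_zero_of_mem_V_zero (hf : Integrable f μ) (hx : x ∈ V N 0) : Gop N μ f x = 0 := by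
  simp [Gop_eq_sum_integral hf hx]

lemma Gop_sub_Gop (hf : Integrable f μ) (hp : p ∈ V N (m + 1)) (hq : q ∈ V N (m + 1))
    (hqp : q ∈ cyl N (m + 1) p) :
    Gop N μ f q - Gop N μ f p
      = ∫ y, (greenLevel (m + 1) q y - greenLevel (m + 1) p y) * f y ∂μ := by
  have hlow : ∑ k ∈ Finset.Icc 1 m, ∫ y, greenLevel k q y * f y ∂μ
      = ∑ k ∈ Finset.Icc 1 m, ∫ y, greenLevel k p y * f y ∂μ :=
    Finset.sum_congr rfl fun k hk => by
      rw [greenLevel_congr (antitone_cyl p (Nat.succ_le_succ (Finset.mem_Icc.1 hk).2) hqp)]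
  simp_rw [sub_mul]
  rw [Gop_eq_sum_integral hf hp, Gop_eq_sum_integral hf hq,
    Finset.sum_Icc_succ_top m.succ_pos, Finset.sum_Icc_succ_top m.succ_pos, hlow,
    add_sub_add_left_eq_sub,
    integral_sub (integrable_greenLevel_mul hf _ q) (integrable_greenLevel_mul hf _ p)]

lemma sum_U_Gop_sub (hf : Integrable f μ) (hp : p ∈ V N (m + 1)) :
    ∑ q ∈ U N (m + 1) p, (Gop N μ f q - Gop N μ f p)
      = (if p m = p (m + 1) then ∫ y in cyl N (m + 1) p, f y ∂μ else 0)
        - ∫ y in cyl N (m + 2) p, f y ∂μ := by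
  have hint : ∀ n, Integrable ((cyl N n p).indicator f) μ := fun n =>
    hf.indicator (measurableSet_cyl n p)
  calc _ = ∑ q ∈ U N (m + 1) p,
          ∫ y, (greenLevel (m + 1) q y - greenLevel (m + 1) p y) * f y ∂μ :=
        Finset.sum_congr rfl fun q hq =>
          Gop_sub_Gop hf hp (mem_U.1 hq).1 (mem_U.1 hq).2.2
    _ = ∫ y, (∑ q ∈ U N (m + 1) p,
          (greenLevel (m + 1) q y - greenLevel (m + 1) p y)) * f y ∂μ := by
        simp_rw [Finset.sum_mul]
        refine (integral_finsetSum _ fun q _ => ?_).symm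
        simp_rw [sub_mul]
        exact (integrable_greenLevel_mul hf _ q).sub (integrable_greenLevel_mul hf _ p)
    _ = ∫ y, ((if p m = p (m + 1) then (cyl N (m + 1) p).indicator f y else 0)
          - (cyl N (m + 2) p).indicator f y) ∂μ := by
        refine integral_congr_ae (.of_forall fun y => ?_)
        simp [sum_U_greenLevel_sub hp, Set.indicator_apply, sub_mul]
    _ = _ := by
        simp_rw [← integral_indicator (measurableSet_cyl _ p)]
        split_ifs
        · exact integral_sub (hint _) (hint _)
        · simp only [zero_sub, integral_neg]

lemma H_succ (u : SSp N → ℝ) (hm : kappa N p ≤ m) :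
    H N (m + 1) u p = H N m u p + ∑ q ∈ U N (m + 1) p, (u q - u p) :=
  Finset.sum_Icc_succ_top (Nat.le_succ_of_le hm) _

lemma H_kappa (u : SSp N → ℝ) (p : SSp N) :
    H N (kappa N p) u p = ∑ q ∈ U N (kappa N p) p, (u q - u p) := by
  rw [H, Finset.Icc_self, Finset.sum_singleton]

lemma H_kappa_Gop_of_mem_V_zero (hf : Integrable f μ) (hp : p ∈ V N 0) :
    H N (kappa N p) (Gop N μ f) p = 0 := by
  rw [H_kappa, (kappa_eq_zero_iff hp).2 hp]
  refine Finset.sum_eq_zero fun q hq => ?_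
  rw [Gop_eq_zero_of_mem_V_zero hf hp, Gop_eq_zero_of_mem_V_zero hf (mem_U.1 hq).1, sub_zero]

lemma H_kappa_Gop_of_notMem_V_zero (hf : Integrable f μ) (hp : p ∈ V N n) (hp0 : p ∉ V N 0) :
    H N (kappa N p) (Gop N μ f) p = -∫ y in cyl N (kappa N p + 1) p, f y ∂μ := by
  obtain ⟨k, hk⟩ := Nat.exists_eq_succ_of_ne_zero (mt (kappa_eq_zero_iff hp).1 hp0)
  rw [H_kappa, hk, sum_U_Gop_sub hf (mem_V_of_kappa_le hp hk.le),
    if_neg (apply_kappa_pred_ne hp hk), zero_sub]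

lemma H_Gop_add_setIntegral_cyl (hf : Integrable f μ) (hp : p ∈ V N n) (hm : kappa N p ≤ m) :
    H N m (Gop N μ f) p + ∫ y in cyl N (m + 1) p, f y ∂μ
      = H N (kappa N p) (Gop N μ f) p + ∫ y in cyl N (kappa N p + 1) p, f y ∂μ := by
  induction m, hm using Nat.le_induction with
  | base => rfl
  | succ m hm ih =>
    have hpm : p ∈ V N m := mem_V_of_kappa_le hp hm
    rw [← ih, H_succ _ hm, sum_U_Gop_sub hf (V_mono m.le_succ hpm),
      if_pos (mem_V.1 hpm m le_rfl), add_assoc, sub_add_cancel]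

lemma tendsto_H_Gop (hf : Integrable f μ) (hp : p ∈ V N n) :
    Tendsto (fun m => H N m (Gop N μ f) p) atTop
      (𝓝 (H N (kappa N p) (Gop N μ f) p + ∫ y in cyl N (kappa N p + 1) p, f y ∂μ)) := by
  have hlim := ((tendsto_setIntegral_cyl hf p).comp (tendsto_add_atTop_nat 1)).const_sub
    (H N (kappa N p) (Gop N μ f) p + ∫ y in cyl N (kappa N p + 1) p, f y ∂μ)
  rw [sub_zero] at hlim
  refine hlim.congr' ?_
  filter_upwards [eventually_ge_atTop (kappa N p)] with m hm
  exact (eq_sub_of_add_eq (H_Gop_add_setIntegral_cyl hf hp hm)).symm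

end GreenOperator

theorem statement17_general {N : ℕ} (μ : Measure (SSp N)) [NullSingletonClass μ]
    {f : SSp N → ℝ} (hf : Integrable f μ) (M : ℕ) :
    (∀ p ∈ V N M, p ∉ V N 0 →
      Tendsto (fun m => -(H N m (Gop N μ f) p)) atTop (𝓝 0)) ∧
    (∀ p ∈ V N 0,
      Tendsto (fun m => -(H N m (Gop N μ f) p)) atTop
        (𝓝 (-∫ x in cyl N 1 p, f x ∂μ))) := by
  refine ⟨fun p hp hp0 => ?_, fun p hp => ?_⟩
  · have hlim := (tendsto_H_Gop hf hp).neg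
    rwa [H_kappa_Gop_of_notMem_V_zero hf hp hp0, neg_add_cancel, neg_zero] at hlim
  · have hlim := (tendsto_H_Gop hf hp).neg
    rwa [H_kappa_Gop_of_mem_V_zero hf hp, (kappa_eq_zero_iff hp).2 hp, zero_add, zero_add] at hlim

/-- for continuous `f` and `M ≥ 0`, the Neumann derivative of
`G_μ f` exists at every point of `V_M`; it equals `0` on `V_M ∖ V_0` and equals
`−∫_{[p_1]} f dμ` at the constant sequence `p ∈ V_0`. -/
theorem statement17 (N : ℕ) (hN : 2 ≤ N)
    (μ : Measure (SSp N)) [IsProbabilityMeasure μ] (hμ : IsBernoulli N μ)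
    (f : SSp N → ℝ) (hf : Continuous f) (M : ℕ) :
    (∀ p ∈ V N M, p ∉ V N 0 →
      Tendsto (fun m => -(H N m (Gop N μ f) p)) atTop (nhds 0)) ∧
    (∀ p ∈ V N 0,
      Tendsto (fun m => -(H N m (Gop N μ f) p)) atTop
        (nhds (-∫ x in cyl N 1 p, f x ∂μ))) := by
  have := hμ.nullSingletonClass hN
  exact statement17_general μ (hf.integrable_of_hasCompactSupport (.of_compactSpace f)) M
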